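/- arXiv:1810.04568 — 2 statements merged into one kernel-verified Lean document; each statement's English description precedes it below -/
import Mathlib

section
/- Let n > -1 and ν > -(n+1)/2, and let D > 0 be a constant such that for all x > 0, ∫₀ˣ t^{-ν} L_{ν+n}(t) dt ≤ D · x^{-ν} L_{ν+n}(x). Suppose 0 < γ < 1/D. Then for all x > 0, ∫₀ˣ e^{-γt} t^{-ν} L_{ν+n}(t) dt < (e^{-γx} / (1 − Dγ)) ( (2(ν+n+1)/(n+1)) x^{-ν} L_{ν+n+1}(x) − ((2ν+n+1)/(n+1)) x^{-ν} L_{ν+n+3}(x) + b_{ν,n} x^{n+4} − c_{ν,n} x^{n+2} ). -/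
/-- The modified Struve function of the first kind. -/
noncomputable def modStruveL (ν x : ℝ) : ℝ :=
  ∑' k : ℕ, (x / 2) ^ (ν + 2 * (k : ℝ) + 1) /
    (Real.Gamma ((k : ℝ) + 3 / 2) * Real.Gamma ((k : ℝ) + ν + 3 / 2))

/-- The constant `b_{ν,n}`. -/
noncomputable def bConst (ν n : ℝ) : ℝ :=
  ((2 * ν + n + 1) * (2 * ν + n + 3)) /
    (Real.sqrt Real.pi * (2 : ℝ) ^ (ν + n + 4) * (n + 1) * (n + 4) * (ν + n + 3) *
      Real.Gamma (ν + n + 9 / 2))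

/-- The constant `c_{ν,n}`. -/
noncomputable def cConst (ν n : ℝ) : ℝ :=
  (2 * ν + n + 1) /
    (Real.sqrt Real.pi * (2 : ℝ) ^ (ν + n + 1) * (n + 1) * (n + 2) *
      Real.Gamma (ν + n + 5 / 2))

open Real Filter Topology MeasureTheory

/-- general term of the Struve series -/
noncomputable def sTerm (μ x : ℝ) (k : ℕ) : ℝ :=
  (x / 2) ^ (μ + 2 * (k : ℝ) + 1) /
    (Real.Gamma ((k : ℝ) + 3 / 2) * Real.Gamma ((k : ℝ) + μ + 3 / 2))

lemma sTerm_pos {μ x : ℝ} (hμ : -3/2 < μ) (hx : 0 < x) (k : ℕ) : 0 < sTerm μ x k := by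
  have hk : (0:ℝ) ≤ k := Nat.cast_nonneg k
  unfold sTerm
  have h1 := Real.Gamma_pos_of_pos (show (0:ℝ) < (k:ℝ) + 3/2 by linarith)
  have h2 := Real.Gamma_pos_of_pos (show (0:ℝ) < (k:ℝ) + μ + 3/2 by linarith)
  positivity

lemma sTerm_succ {μ x : ℝ} (hμ : -3/2 < μ) (hx : 0 < x) (k : ℕ) :
    sTerm μ x (k+1) = sTerm μ x k * ((x/2)^2 / (((k:ℝ) + 3/2) * ((k:ℝ) + μ + 3/2))) := by
  have hk : (0:ℝ) ≤ k := Nat.cast_nonneg k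
  unfold sTerm
  have h1 := Real.Gamma_pos_of_pos (show (0:ℝ) < (k:ℝ) + 3/2 by linarith)
  have h2 := Real.Gamma_pos_of_pos (show (0:ℝ) < (k:ℝ) + μ + 3/2 by linarith)
  have e1 : Real.Gamma (((k+1:ℕ):ℝ) + 3/2) = ((k:ℝ)+3/2) * Real.Gamma ((k:ℝ)+3/2) := by
    rw [← Real.Gamma_add_one (by linarith)]; congr 1; push_cast; ring
  have e2 : Real.Gamma (((k+1:ℕ):ℝ) + μ + 3/2) = ((k:ℝ)+μ+3/2) * Real.Gamma ((k:ℝ)+μ+3/2) := by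
    rw [← Real.Gamma_add_one (by linarith)]; congr 1; push_cast; ring
  have e3 : (x/2) ^ (μ + 2 * ((k+1:ℕ):ℝ) + 1) = (x/2) ^ (μ + 2 * (k:ℝ) + 1) * (x/2)^2 := by
    rw [← Real.rpow_natCast (x/2) 2, ← Real.rpow_add (by positivity)]; congr 1; push_cast; ring
  rw [e1, e2, e3]
  have : (0:ℝ) < (k:ℝ) + 3/2 := by linarith
  have : (0:ℝ) < (k:ℝ) + μ + 3/2 := by linarith
  field_simp

lemma sTerm_rel1 {μ x : ℝ} (hμ : -3/2 < μ) (hx : 0 < x) (k : ℕ) :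
    sTerm μ x k * x = sTerm (μ + 1) x k * (2 * ((k:ℝ) + μ + 3/2)) := by
  have hk : (0:ℝ) ≤ k := Nat.cast_nonneg k
  unfold sTerm
  have h1 := Real.Gamma_pos_of_pos (show (0:ℝ) < (k:ℝ) + 3/2 by linarith)
  have h2 := Real.Gamma_pos_of_pos (show (0:ℝ) < (k:ℝ) + μ + 3/2 by linarith)
  have e2 : Real.Gamma ((k:ℝ) + (μ + 1) + 3/2) = ((k:ℝ)+μ+3/2) * Real.Gamma ((k:ℝ)+μ+3/2) := by
    rw [← Real.Gamma_add_one (by linarith)]; congr 1; ring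
  have e3 : (x/2) ^ (μ + 1 + 2 * (k:ℝ) + 1) = (x/2) ^ (μ + 2 * (k:ℝ) + 1) * (x/2) := by
    rw [← Real.rpow_add_one (by positivity)]; congr 1; ring
  rw [e2, e3]
  have : (0:ℝ) < (k:ℝ) + μ + 3/2 := by linarith
  generalize (k:ℝ) + μ + 3/2 = z at *
  field_simp

lemma sTerm_rel3 {μ x : ℝ} (hμ : -3/2 < μ) (k : ℕ) :
    sTerm (μ + 3) x k * ((k:ℝ) + μ + 7/2) = sTerm (μ + 1) x (k+1) * ((k:ℝ) + 3/2) := by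
  have hk : (0:ℝ) ≤ k := Nat.cast_nonneg k
  unfold sTerm
  have h1 := Real.Gamma_pos_of_pos (show (0:ℝ) < (k:ℝ) + 3/2 by linarith)
  have h2 := Real.Gamma_pos_of_pos (show (0:ℝ) < (k:ℝ) + μ + 7/2 by linarith)
  have e1 : Real.Gamma (((k+1:ℕ):ℝ) + 3/2) = ((k:ℝ)+3/2) * Real.Gamma ((k:ℝ)+3/2) := by
    rw [← Real.Gamma_add_one (by linarith)]; congr 1; push_cast; ring
  have e2 : Real.Gamma ((k:ℝ) + (μ + 3) + 3/2) = ((k:ℝ)+μ+7/2) * Real.Gamma ((k:ℝ)+μ+7/2) := by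
    rw [← Real.Gamma_add_one (by linarith)]; congr 1; ring
  have e4 : ((k+1:ℕ):ℝ) + (μ + 1) + 3/2 = (k:ℝ)+μ+7/2 := by push_cast; ring
  have e3 : μ + 1 + 2 * ((k+1:ℕ):ℝ) + 1 = μ + 3 + 2 * (k:ℝ) + 1 := by push_cast; ring
  rw [e1, e2, e3, e4]
  have : (0:ℝ) < (k:ℝ) + μ + 7/2 := by linarith
  have : (0:ℝ) < (k:ℝ) + 3/2 := by linarith
  generalize (k:ℝ) + μ + 7/2 = z at *
  generalize (k:ℝ) + 3/2 = y at *
  field_simp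

lemma sTerm_summable {μ x : ℝ} (hμ : -3/2 < μ) (hx : 0 < x) : Summable (sTerm μ x) := by
  refine summable_of_ratio_test_tendsto_lt_one (l := 0) one_pos
    (Eventually.of_forall fun k => (sTerm_pos hμ hx k).ne') ?_
  have : ∀ k : ℕ, ‖sTerm μ x (k+1)‖ / ‖sTerm μ x k‖ =
      (x/2)^2 / (((k:ℝ) + 3/2) * ((k:ℝ) + μ + 3/2)) := by
    intro k
    rw [Real.norm_of_nonneg (sTerm_pos hμ hx _).le, Real.norm_of_nonneg (sTerm_pos hμ hx _).le,
      sTerm_succ hμ hx]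
    have := (sTerm_pos hμ hx k).ne'
    field_simp
  simp_rw [this]
  refine Tendsto.div_atTop tendsto_const_nhds ?_
  have hc : Tendsto (fun k : ℕ => (k:ℝ)) atTop atTop := tendsto_natCast_atTop_atTop
  exact (tendsto_atTop_add_const_right _ _ hc).atTop_mul_atTop₀
    (tendsto_atTop_add_const_right _ _ (tendsto_atTop_add_const_right _ _ hc))

lemma modStruveL_eq (μ x : ℝ) : modStruveL μ x = ∑' k, sTerm μ x k := rfl

/-- coefficient -/
noncomputable def cf (ν n : ℝ) (k : ℕ) : ℝ := sTerm (ν + n) 1 k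

lemma term_eq (ν n : ℝ) {t : ℝ} (ht : 0 < t) (k : ℕ) :
    t ^ (-ν) * sTerm (ν + n) t k = cf ν n k * t ^ (n + 2 * (k:ℝ) + 1) := by
  unfold cf sTerm
  rw [Real.div_rpow ht.le (by norm_num), Real.div_rpow (by norm_num) (by norm_num), Real.one_rpow]
  have : t ^ (n + 2 * (k:ℝ) + 1) = t ^ (-ν) * t ^ (ν + n + 2 * (k:ℝ) + 1) := by
    rw [← Real.rpow_add ht]; congr 1; ring
  rw [this]; ring

/-- continuous version of the integrand -/
noncomputable def gFun (ν n t : ℝ) : ℝ := ∑' k : ℕ, cf ν n k * |t| ^ (n + 2 * (k:ℝ) + 1)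

lemma cf_summable {ν n : ℝ} (hμ : -3/2 < ν + n) {t : ℝ} (ht : 0 < t) :
    Summable fun k : ℕ => cf ν n k * t ^ (n + 2 * (k:ℝ) + 1) := by
  simp_rw [← term_eq ν n ht]
  exact (sTerm_summable hμ ht).mul_left _

lemma gFun_eq (ν n : ℝ) {t : ℝ} (ht : 0 < t) :
    t ^ (-ν) * modStruveL (ν + n) t = gFun ν n t := by
  unfold gFun
  rw [modStruveL_eq, ← tsum_mul_left, abs_of_pos ht]
  exact tsum_congr fun k => term_eq ν n ht k

lemma gFun_cont {ν n : ℝ} (hn : -1 < n) (hμ : -3/2 < ν + n) : Continuous (gFun ν n) := by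
  rw [continuous_iff_continuousAt]
  intro a
  have hX : 0 < |a| + 1 := by positivity
  have : ContinuousOn (gFun ν n) {t | |t| < |a| + 1} := by
    refine continuousOn_tsum (u := fun k : ℕ => cf ν n k * (|a|+1) ^ (n + 2 * (k:ℝ) + 1)) ?_
      (cf_summable hμ hX) ?_
    · intro k
      have hk : (0:ℝ) ≤ k := Nat.cast_nonneg k
      refine (continuous_const.mul ?_).continuousOn
      exact continuous_abs.rpow_const (fun _ => Or.inr (by linarith))
    · intro k t ht
      have hk : (0:ℝ) ≤ k := Nat.cast_nonneg k
      have hc : 0 < cf ν n k := sTerm_pos hμ one_pos k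
      rw [Real.norm_of_nonneg (by positivity)]
      refine mul_le_mul_of_nonneg_left ?_ hc.le
      exact Real.rpow_le_rpow (abs_nonneg _) (le_of_lt ht) (by linarith)
  refine this.continuousAt (IsOpen.mem_nhds (isOpen_lt continuous_abs continuous_const) ?_)
  simp

lemma gFun_integral {ν n : ℝ} (hn : -1 < n) (hμ : -3/2 < ν + n) {x : ℝ} (hx : 0 < x) :
    HasSum (fun k : ℕ => cf ν n k * (x ^ (n + 2 * (k:ℝ) + 2) / (n + 2 * (k:ℝ) + 2)))
      (∫ t in (0:ℝ)..x, gFun ν n t) := by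
  have hterm : ∀ k : ℕ, ∫ t in Set.Ioc 0 x, cf ν n k * |t| ^ (n + 2 * (k:ℝ) + 1) =
      cf ν n k * (x ^ (n + 2 * (k:ℝ) + 2) / (n + 2 * (k:ℝ) + 2)) := by
    intro k
    have hk : (0:ℝ) ≤ k := Nat.cast_nonneg k
    rw [setIntegral_congr_fun (g := fun t => cf ν n k * t ^ (n + 2 * (k:ℝ) + 1)) measurableSet_Ioc
      (fun t ht => by simp only [abs_of_pos ht.1]), ← intervalIntegral.integral_of_le hx.le,
      intervalIntegral.integral_const_mul, integral_rpow (Or.inl (by linarith)),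
      Real.zero_rpow (by linarith), sub_zero,
      show n + 2 * (k:ℝ) + 1 + 1 = n + 2 * (k:ℝ) + 2 by ring]
  have hpos : ∀ (k : ℕ) (t : ℝ), 0 ≤ cf ν n k * |t| ^ (n + 2 * (k:ℝ) + 1) := fun k t => by
    have hc : 0 < cf ν n k := sTerm_pos hμ one_pos k
    positivity
  have hs : Summable fun k : ℕ => cf ν n k * (x ^ (n + 2 * (k:ℝ) + 2) / (n + 2 * (k:ℝ) + 2)) := by
    refine Summable.of_nonneg_of_le (fun k => ?_) (fun k => ?_)
      ((cf_summable hμ hx).mul_left (x / (n+2)))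
    · rw [← hterm]; exact integral_nonneg (hpos k)
    · have hk : (0:ℝ) ≤ k := Nat.cast_nonneg k
      have hc : 0 < cf ν n k := sTerm_pos hμ one_pos k
      rw [show n + 2 * (k:ℝ) + 2 = (n + 2 * (k:ℝ) + 1) + 1 by ring, Real.rpow_add_one hx.ne']
      calc cf ν n k * (x ^ (n + 2 * (k:ℝ) + 1) * x / (n + 2 * (k:ℝ) + 1 + 1))
          ≤ cf ν n k * (x ^ (n + 2 * (k:ℝ) + 1) * x / (n + 2)) := by
            refine mul_le_mul_of_nonneg_left ?_ hc.le
            exact div_le_div_of_nonneg_left (by positivity) (by linarith) (by linarith)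
        _ = _ := by ring
  rw [intervalIntegral.integral_of_le hx.le]
  simp_rw [← hterm]
  unfold gFun
  refine hasSum_integral_of_summable_integral_norm (F := fun (k:ℕ) (t:ℝ) => cf ν n k * |t| ^ (n + 2 * (k:ℝ) + 1)) ?_ ?_
  · intro k
    have hk : (0:ℝ) ≤ k := Nat.cast_nonneg k
    have : Continuous fun t : ℝ => cf ν n k * |t| ^ (n + 2 * (k:ℝ) + 1) :=
      continuous_const.mul (continuous_abs.rpow_const (fun _ => Or.inr (by linarith)))
    exact (this.integrableOn_Icc).mono_set Set.Ioc_subset_Icc_self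
  · simp_rw [Real.norm_of_nonneg (hpos _ _), hterm]
    exact hs

lemma exp_part {g : ℝ → ℝ} (hg : Continuous g) {D γ : ℝ} (hγ : 0 < γ)
    (hb : ∀ x > (0:ℝ), ∫ t in (0:ℝ)..x, g t ≤ D * g x) {x : ℝ} (hx : 0 < x) :
    (1 - D * γ) * ∫ t in (0:ℝ)..x, Real.exp (-γ * t) * g t ≤
      Real.exp (-γ * x) * ∫ t in (0:ℝ)..x, g t := by
  have hE : Continuous fun t => Real.exp (-γ * t) * g t := by fun_prop
  let H : ℝ → ℝ := fun y => Real.exp (-γ * y) * (∫ t in (0:ℝ)..y, g t) -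
    (1 - D * γ) * ∫ t in (0:ℝ)..y, Real.exp (-γ * t) * g t
  have hH : ∀ y, HasDerivAt H (γ * Real.exp (-γ * y) * (D * g y - ∫ t in (0:ℝ)..y, g t)) y := by
    intro y
    have h1 : HasDerivAt (fun y => ∫ t in (0:ℝ)..y, g t) (g y) y :=
      hg.integral_hasStrictDerivAt 0 y |>.hasDerivAt
    have h2 : HasDerivAt (fun y => ∫ t in (0:ℝ)..y, Real.exp (-γ * t) * g t) (Real.exp (-γ * y) * g y) y :=
      hE.integral_hasStrictDerivAt 0 y |>.hasDerivAt
    have h3 : HasDerivAt (fun y => Real.exp (-γ * y)) (Real.exp (-γ * y) * (-γ * 1)) y :=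
      ((hasDerivAt_id y).const_mul (-γ)).exp
    exact ((h3.mul h1).sub (h2.const_mul (1 - D * γ))).congr_deriv (by ring)
  have hm : MonotoneOn H (Set.Icc 0 x) := by
    refine monotoneOn_of_deriv_nonneg (convex_Icc 0 x)
      (fun y _ => (hH y).continuousAt.continuousWithinAt)
      (fun y _ => (hH y).differentiableAt.differentiableWithinAt) ?_
    intro y hy
    rw [interior_Icc] at hy
    rw [(hH y).deriv]
    have := hb y hy.1
    exact mul_nonneg (by positivity) (by linarith)
  have := hm ⟨le_rfl, hx.le⟩ ⟨hx.le, le_rfl⟩ hx.le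
  simp only [H, intervalIntegral.integral_same] at this
  linarith

lemma alg_ineq {μ p s K w : ℝ} (hp : 0 < p) (hs : 0 < s) (hμ : 2 * μ + 2 = s + p) (hK : 0 ≤ K)
    (hw : 0 < w) :
    w * (2 * (K + μ + 3/2) * (K + μ + 5/2) / (p + 2 * K + 1)) ≤
      2 * (μ + 1) / p * (w * (K + μ + 5/2)) - s / p * (w * (K + 1/2)) := by
  obtain rfl : μ = (s + p) / 2 - 1 := by linarith
  rw [← sub_nonneg]
  have : 2 * ((s + p) / 2 - 1 + 1) / p * (w * (K + ((s + p) / 2 - 1) + 5/2)) - s / p * (w * (K + 1/2))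
      - w * (2 * (K + ((s + p) / 2 - 1) + 3/2) * (K + ((s + p) / 2 - 1) + 5/2) / (p + 2 * K + 1))
      = w * s * (2 * K + 1) * (s + 2) / (2 * p * (p + 2 * K + 1)) := by
    have : p + 2 * K + 1 ≠ 0 := by positivity
    field_simp
    ring
  rw [this]
  positivity

lemma series_part {ν n : ℝ} (hn : -1 < n) (hν : 0 < 2 * ν + n + 1) {x : ℝ} (hx : 0 < x) :
    ∫ t in (0:ℝ)..x, gFun ν n t <
      ((2 * (ν + n + 1) / (n + 1)) * (x ^ (-ν) * modStruveL (ν + n + 1) x) -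
        ((2 * ν + n + 1) / (n + 1)) * (x ^ (-ν) * modStruveL (ν + n + 3) x) +
        bConst ν n * x ^ (n + 4) - cConst ν n * x ^ (n + 2)) := by
  have hμ : -1 < ν + n := by linarith
  have hF := gFun_integral hn (by linarith : -3/2 < ν + n) hx
  have hT : ∀ k : ℕ, cf ν n k * (x ^ (n + 2 * (k:ℝ) + 2) / (n + 2 * (k:ℝ) + 2)) =
      x ^ (-ν) * (sTerm (ν + n) x k * (x / (n + 2 * (k:ℝ) + 2))) := by
    intro k
    rw [← mul_assoc (x ^ (-ν)), term_eq ν n hx,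
      show n + 2 * (k:ℝ) + 2 = (n + 2 * (k:ℝ) + 1) + 1 by ring, Real.rpow_add_one hx.ne']
    ring
  have s1 := (sTerm_summable (by linarith : -3/2 < ν + n + 1) hx).mul_left (x ^ (-ν))
  have s3 := (sTerm_summable (by linarith : -3/2 < ν + n + 3) hx).mul_left (x ^ (-ν))
  simp_rw [hT] at hF
  have hb : 0 < bConst ν n * x ^ (n + 4) := by
    unfold bConst
    have := Real.Gamma_pos_of_pos (show 0 < ν + n + 9/2 by linarith)
    have : 0 < n + 1 := by linarith
    have : 0 < n + 4 := by linarith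
    have : 0 < ν + n + 3 := by linarith
    have : 0 < 2 * ν + n + 3 := by linarith
    positivity
  have h0 : x ^ (-ν) * (sTerm (ν + n) x 0 * (x / (n + 2 * ((0:ℕ):ℝ) + 2))) =
      2 * (ν + n + 1) / (n + 1) * (x ^ (-ν) * sTerm (ν + n + 1) x 0) - cConst ν n * x ^ (n + 2) := by
    have hc : cConst ν n * x ^ (n + 2) =
        (2 * ν + n + 1) / ((n + 1) * (n + 2)) * (x ^ (-ν) * sTerm (ν + n + 1) x 0) := by
      rw [show ν + n + 1 = ν + (n + 1) by ring, term_eq ν (n+1) hx]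
      unfold cf sTerm cConst
      have e1 : Real.Gamma (((0:ℕ):ℝ) + 3/2) = 1/2 * √π := by
        rw [← Real.Gamma_one_half_eq, ← Real.Gamma_add_one (by norm_num)]; norm_num
      rw [e1, Real.div_rpow (by norm_num) (by norm_num), Real.one_rpow,
        show n + 1 + 2 * ((0:ℕ):ℝ) + 1 = n + 2 by push_cast; ring,
        show ((0:ℕ):ℝ) + (ν + (n + 1)) + 3/2 = ν + n + 5/2 by push_cast; ring,
        show ν + (n + 1) + 2 * ((0:ℕ):ℝ) + 1 = (ν + n + 1) + 1 by push_cast; ring,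
        Real.rpow_add_one (by norm_num : (2:ℝ) ≠ 0) (ν + n + 1)]
      have := Real.Gamma_pos_of_pos (show 0 < ν + n + 5/2 by linarith)
      have : 0 < n + 1 := by linarith
      have : 0 < n + 2 := by linarith
      have : 0 < √π := by positivity
      have : (0:ℝ) < 2 ^ (ν + n + 1) := by positivity
      generalize (2:ℝ) ^ (ν + n + 1) = y at *
      generalize Real.Gamma (ν + n + 5/2) = z at *
      field_simp
    rw [hc]
    have e := sTerm_rel1 (by linarith : -3/2 < ν + n) hx 0
    rw [← mul_div_assoc, e]
    have : 0 < n + 1 := by linarith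
    have : 0 < n + 2 := by linarith
    simp only [Nat.cast_zero, mul_zero, add_zero, zero_add]
    field_simp
    ring
  have hk : ∀ k : ℕ, x ^ (-ν) * (sTerm (ν + n) x (k+1) * (x / (n + 2 * ((k+1:ℕ):ℝ) + 2))) ≤
      2 * (ν + n + 1) / (n + 1) * (x ^ (-ν) * sTerm (ν + n + 1) x (k+1)) -
      (2 * ν + n + 1) / (n + 1) * (x ^ (-ν) * sTerm (ν + n + 3) x k) := by
    intro k
    have hk : (0:ℝ) ≤ k := Nat.cast_nonneg k
    have r1 := sTerm_rel1 (by linarith : -3/2 < ν + n) hx (k+1)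
    have r3 := sTerm_rel3 (x := x) (by linarith : -3/2 < ν + n) k
    have hz : 0 < (k:ℝ) + (ν + n) + 7/2 := by linarith
    have hS := sTerm_pos (by linarith : -3/2 < ν + n + 1) hx (k+1)
    have hw : 0 < x ^ (-ν) * (sTerm (ν + n + 1) x (k+1) / ((k:ℝ) + (ν + n) + 7/2)) := by positivity
    have key := alg_ineq (μ := ν + n) (p := n + 1) (s := 2 * ν + n + 1) (K := (k:ℝ) + 1)
      (by linarith) hν (by ring) (by positivity) hw
    rw [← mul_div_assoc, r1, eq_div_of_mul_eq hz.ne' r3]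
    have d1 : (k:ℝ) + 1 + (ν + n) + 5/2 = (k:ℝ) + (ν + n) + 7/2 := by ring
    have d2 : n + 1 + 2 * ((k:ℝ) + 1) + 1 = n + 2 * ((k:ℝ) + 1) + 2 := by ring
    have d3 : (k:ℝ) + 1 + 1/2 = (k:ℝ) + 3/2 := by ring
    rw [d1, d2, d3] at key
    push_cast
    generalize (k:ℝ) + (ν + n) + 7/2 = z at *
    convert key using 1
    · field_simp
    · field_simp
  have s1' := (summable_nat_add_iff 1).2 s1
  have hle := Summable.tsum_le_tsum hk ((summable_nat_add_iff 1).2 hF.summable)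
    ((s1'.mul_left _).sub (s3.mul_left _))
  rw [Summable.tsum_sub (s1'.mul_left _) (s3.mul_left _), tsum_mul_left (a := 2 * (ν + n + 1) / (n + 1)),
    tsum_mul_left (a := (2 * ν + n + 1) / (n + 1))] at hle
  rw [← hF.tsum_eq, hF.summable.tsum_eq_zero_add, h0, modStruveL_eq, modStruveL_eq,
    ← tsum_mul_left (a := x ^ (-ν)), ← tsum_mul_left (a := x ^ (-ν)), s1.tsum_eq_zero_add, mul_add (2 * (ν + n + 1) / (n + 1))]
  linarith

theorem struve_exp_integral_upper_bound_two (ν n D γ : ℝ) (hn : n > -1)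
    (hν : ν > -((n + 1) / 2)) (hD : D > 0)
    (hbound : ∀ x > (0 : ℝ), ∫ t in (0 : ℝ)..x, t ^ (-ν) * modStruveL (ν + n) t ≤
      D * (x ^ (-ν) * modStruveL (ν + n) x))
    (hγ1 : 0 < γ) (hγ2 : γ < 1 / D) (x : ℝ) (hx : x > 0) :
    ∫ t in (0 : ℝ)..x, Real.exp (-γ * t) * (t ^ (-ν) * modStruveL (ν + n) t) <
      (Real.exp (-γ * x) / (1 - D * γ)) *
        ((2 * (ν + n + 1) / (n + 1)) * (x ^ (-ν) * modStruveL (ν + n + 1) x) -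
        ((2 * ν + n + 1) / (n + 1)) * (x ^ (-ν) * modStruveL (ν + n + 3) x) +
        bConst ν n * x ^ (n + 4) - cConst ν n * x ^ (n + 2)) := by

  have hμ : -1 < ν + n := by linarith
  have hcongr : ∀ y > (0:ℝ), ∫ t in (0 : ℝ)..y, t ^ (-ν) * modStruveL (ν + n) t =
      ∫ t in (0:ℝ)..y, gFun ν n t := by
    intro y hy
    rw [intervalIntegral.integral_of_le hy.le, intervalIntegral.integral_of_le hy.le]
    exact setIntegral_congr_fun measurableSet_Ioc fun t ht => gFun_eq ν n ht.1
  have hcongr2 : ∫ t in (0 : ℝ)..x, Real.exp (-γ * t) * (t ^ (-ν) * modStruveL (ν + n) t) =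
      ∫ t in (0:ℝ)..x, Real.exp (-γ * t) * gFun ν n t := by
    rw [intervalIntegral.integral_of_le hx.le, intervalIntegral.integral_of_le hx.le]
    exact setIntegral_congr_fun measurableSet_Ioc fun t ht => by
      exact congrArg (Real.exp (-γ * t) * ·) (gFun_eq ν n ht.1)
  have h1 := exp_part (gFun_cont hn (by linarith : -3/2 < ν + n)) hγ1 (D := D)
    (fun y hy => by rw [← hcongr y hy, ← gFun_eq ν n hy]; exact hbound y hy) hx
  have h2 := series_part hn (by linarith : 0 < 2 * ν + n + 1) hx
  have hpos : 0 < 1 - D * γ := by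
    rw [lt_div_iff₀ hD] at hγ2
    linarith
  rw [hcongr2, div_mul_eq_mul_div, lt_div_iff₀ hpos, mul_comm]
  exact h1.trans_lt (mul_lt_mul_of_pos_left h2 (Real.exp_pos _))
end

section
/- Let 0 ≤ γ < 1, n > -3/2 and ν ∈ ℝ. Then ∫₀ˣ e^{-γt} t^{-ν} L_{ν+n}(t) dt is asymptotically equivalent to (1/(√(2π)(1−γ))) x^{-ν-1/2} e^{(1−γ)x} as x → ∞; that is, the ratio of the two quantities tends to 1 as x → ∞. -/
open Filter Topology

theorem lh_aux (f g f' g' : ℝ → ℝ)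
    (hf : ∀ᶠ x in atTop, HasDerivAt f (f' x) x) (hg : ∀ᶠ x in atTop, HasDerivAt g (g' x) x)
    (hpos : ∀ᶠ x in atTop, 0 < g' x) (hginf : Tendsto g atTop atTop)
    (hlim : Tendsto (fun x => f' x / g' x) atTop (𝓝 1)) :
    Tendsto (fun x => f x / g x) atTop (𝓝 1) := by
  rw [Metric.tendsto_atTop']
  intro ε hε
  have h1 : ∀ᶠ x in atTop, |f' x - g' x| ≤ ε / 2 * g' x := by
    have := (Metric.tendsto_nhds.1 hlim) (ε / 2) (by positivity)
    filter_upwards [this, hpos] with x hx hp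
    rw [Real.dist_eq] at hx
    have e : f' x - g' x = (f' x / g' x - 1) * g' x := by field_simp
    rw [e, abs_mul, abs_of_pos hp]
    gcongr
  obtain ⟨X, hX⟩ := eventually_atTop.1 (hf.and (hg.and (hpos.and h1)))
  have m1 : MonotoneOn (fun x => ε / 2 * g x - (f x - g x)) (Set.Ici X) := by
    apply monotoneOn_of_hasDerivWithinAt_nonneg (convex_Ici X)
      (f' := fun x => ε / 2 * g' x - (f' x - g' x))
    · intro x hx
      obtain ⟨a, b, _⟩ := hX x hx
      exact (((b.const_mul _).sub (a.sub b)).continuousAt).continuousWithinAt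
    · intro x hx
      obtain ⟨a, b, _⟩ := hX x (interior_subset hx)
      exact ((b.const_mul _).sub (a.sub b)).hasDerivWithinAt
    · intro x hx
      obtain ⟨a, b, _, c⟩ := hX x (interior_subset hx)
      have := (abs_le.1 c).2
      linarith
  have m2 : MonotoneOn (fun x => ε / 2 * g x + (f x - g x)) (Set.Ici X) := by
    apply monotoneOn_of_hasDerivWithinAt_nonneg (convex_Ici X)
      (f' := fun x => ε / 2 * g' x + (f' x - g' x))
    · intro x hx
      obtain ⟨a, b, _⟩ := hX x hx
      exact (((b.const_mul _).add (a.sub b)).continuousAt).continuousWithinAt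
    · intro x hx
      obtain ⟨a, b, _⟩ := hX x (interior_subset hx)
      exact ((b.const_mul _).add (a.sub b)).hasDerivWithinAt
    · intro x hx
      obtain ⟨a, b, _, c⟩ := hX x (interior_subset hx)
      have := (abs_le.1 c).1
      linarith
  set C := |ε / 2 * g X| + |f X - g X| with hC
  obtain ⟨Y, hY⟩ := eventually_atTop.1 (hginf.eventually_gt_atTop (max 0 (2 * C / ε)))
  refine ⟨max X Y, fun x hx => ?_⟩
  have hxX : X ≤ x := (le_max_left _ _).trans hx.le
  have hxY := hY x ((le_max_right _ _).trans hx.le)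
  have g0 : 0 < g x := (le_max_left _ _).trans_lt hxY
  have g1 : 2 * C / ε < g x := (le_max_right _ _).trans_lt hxY
  have a1 := m1 (Set.mem_Ici.2 le_rfl) (Set.mem_Ici.2 hxX) hxX
  have a2 := m2 (Set.mem_Ici.2 le_rfl) (Set.mem_Ici.2 hxX) hxX
  simp only at a1 a2
  have b1 := neg_abs_le (ε / 2 * g X)
  have b2 := neg_abs_le (f X - g X)
  have b3 := le_abs_self (f X - g X)
  rw [div_lt_iff₀ hε] at g1
  have : |f x - g x| < ε * g x := by
    rw [abs_lt]; constructor <;> nlinarith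
  rw [Real.dist_eq]
  have e : f x / g x - 1 = (f x - g x) / g x := by field_simp
  rw [e, abs_div, abs_of_pos g0, div_lt_iff₀ g0]
  exact this

theorem abel_aux (a d : ℕ → ℝ) (hd : ∀ k, 0 < d k)
    (hs : ∀ x : ℝ, Summable (fun k => d k * x ^ (2 * k)))
    (hsa : ∀ x : ℝ, Summable (fun k => a k * x ^ (2 * k)))
    (hlim : Tendsto (fun k => a k / d k) atTop (𝓝 1)) :
    Tendsto (fun x : ℝ => (∑' k, a k * x ^ (2 * k)) / (∑' k, d k * x ^ (2 * k))) atTop (𝓝 1) := by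
  set D : ℝ → ℝ := fun x => ∑' k, d k * x ^ (2 * k) with hD
  have hDk : ∀ k x, d k * x ^ (2 * k) ≤ D x := fun k x =>
    (hs x).le_tsum k (fun j _ => mul_nonneg (hd j).le (by rw [pow_mul]; positivity))
  have hDpos : ∀ x, 0 < D x := fun x => lt_of_lt_of_le (by simpa using hd 0) (hDk 0 x)
  have hsmall : ∀ k : ℕ, Tendsto (fun x => x ^ (2 * k) / D x) atTop (𝓝 0) := by
    intro k
    have : Tendsto (fun x : ℝ => (1 / d (k + 1)) * (x ^ 2)⁻¹) atTop (𝓝 0) := by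
      have := (tendsto_inv_atTop_zero.comp (tendsto_pow_atTop (α := ℝ) (n := 2) two_ne_zero)).const_mul (1 / d (k + 1))
      simpa using this
    apply squeeze_zero' (Eventually.of_forall fun x => div_nonneg (by rw [pow_mul]; positivity) (hDpos x).le) _ this
    filter_upwards [eventually_gt_atTop 0] with x hx
    have h1 := hDk (k + 1) x
    have h2 := hd (k + 1)
    rw [div_le_iff₀ (hDpos x)]
    calc x ^ (2 * k) = 1 / d (k + 1) * (x ^ 2)⁻¹ * (d (k + 1) * x ^ (2 * (k + 1))) := by
          field_simp; ring
      _ ≤ _ := by gcongr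
  rw [Metric.tendsto_nhds]
  intro ε hε
  obtain ⟨N, hN⟩ := eventually_atTop.1 ((Metric.tendsto_nhds.1 hlim) (ε / 2) (by positivity))
  have hfin : Tendsto (fun x => ∑ k ∈ Finset.range N, (a k - d k) * (x ^ (2 * k) / D x)) atTop (𝓝 0) := by
    have := tendsto_finsetSum (Finset.range N) (fun k _ => (hsmall k).const_mul (a k - d k))
    simpa using this
  filter_upwards [(Metric.tendsto_nhds.1 hfin) (ε / 2) (by positivity)] with x hx
  rw [Real.dist_eq] at hx ⊢
  have e1 : (∑' k, a k * x ^ (2 * k)) - D x = ∑' k, (a k - d k) * x ^ (2 * k) := by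
    rw [hD, ← (hsa x).tsum_sub (hs x)]
    congr 1; ext k; ring
  have hsub : Summable (fun k => (a k - d k) * x ^ (2 * k)) := by
    have := (hsa x).sub (hs x)
    simp only [← sub_mul] at this
    exact this
  have e2 := hsub.sum_add_tsum_nat_add N
  have hs' := (summable_nat_add_iff N).2 (hs x)
  have e3 : |∑' k, (a (k + N) - d (k + N)) * x ^ (2 * (k + N))| ≤ ε / 2 * D x := by
    have hb : ∀ k, ‖(a (k + N) - d (k + N)) * x ^ (2 * (k + N))‖ ≤ ε / 2 * (d (k + N) * x ^ (2 * (k + N))) := by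
      intro k
      have h := hN (k + N) (by omega)
      have hp := hd (k + N)
      rw [Real.dist_eq] at h
      have hx0 : 0 ≤ x ^ (2 * (k + N)) := by rw [pow_mul]; positivity
      rw [Real.norm_eq_abs, abs_mul, abs_of_nonneg hx0]
      have e : a (k + N) - d (k + N) = (a (k + N) / d (k + N) - 1) * d (k + N) := by field_simp
      rw [e, abs_mul, abs_of_pos hp, ← mul_assoc]
      gcongr
    have h1 := tsum_of_norm_bounded ((hs'.mul_left (ε / 2)).hasSum) hb
    rw [Real.norm_eq_abs] at h1
    refine h1.trans ?_
    rw [tsum_mul_left]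
    gcongr
    show _ ≤ ∑' k, d k * x ^ (2 * k)
    rw [← (hs x).sum_add_tsum_nat_add N]
    have : 0 ≤ ∑ i ∈ Finset.range N, d i * x ^ (2 * i) :=
      Finset.sum_nonneg fun j _ => mul_nonneg (hd j).le (by rw [pow_mul]; positivity)
    linarith
  have e4 : (∑' k, a k * x ^ (2 * k)) / D x - 1 =
      (∑ k ∈ Finset.range N, (a k - d k) * (x ^ (2 * k) / D x)) +
      (∑' k, (a (k + N) - d (k + N)) * x ^ (2 * (k + N))) / D x := by
    have := (hDpos x).ne'
    have e5 : (∑ k ∈ Finset.range N, (a k - d k) * (x ^ (2 * k) / D x)) =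
      (∑ k ∈ Finset.range N, (a k - d k) * x ^ (2 * k)) / D x := by
      rw [Finset.sum_div]; congr 1; ext k; ring
    rw [e5, ← add_div, e2, ← e1]; field_simp
  rw [e4]
  have e6 : |(∑' k, (a (k + N) - d (k + N)) * x ^ (2 * (k + N))) / D x| ≤ ε / 2 := by
    rw [abs_div, abs_of_pos (hDpos x), div_le_iff₀ (hDpos x)]; exact e3
  have := abs_add_le (∑ k ∈ Finset.range N, (a k - d k) * (x ^ (2 * k) / D x)) ((∑' k, (a (k + N) - d (k + N)) * x ^ (2 * (k + N))) / D x)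
  rw [sub_zero] at hx
  linarith

theorem gamma_seq_aux (a : ℝ) (ha : 0 < a) :
    Tendsto (fun k : ℕ => Real.Gamma (k + (a + 1)) / ((k : ℝ) ^ a * (Nat.factorial k : ℝ))) atTop (𝓝 1) := by
  have h := Real.GammaSeq_tendsto_Gamma a
  have hprod : ∀ k : ℕ, Real.Gamma (k + (a + 1)) = Real.Gamma a * ∏ j ∈ Finset.range (k + 1), (a + j) := by
    intro k
    induction k with
    | zero => simp [Real.Gamma_add_one ha.ne']; ring
    | succ k ih =>
      rw [Finset.prod_range_succ, ← mul_assoc, ← ih]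
      have : ((k + 1 : ℕ) : ℝ) + (a + 1) = (k + (a + 1)) + 1 := by push_cast; ring
      rw [this, Real.Gamma_add_one (by positivity)]
      push_cast; ring
  have hG := Real.Gamma_pos_of_pos ha
  have h2 := (h.inv₀ hG.ne').const_mul (Real.Gamma a)
  rw [mul_inv_cancel₀ hG.ne'] at h2
  refine h2.congr fun k => ?_
  rw [hprod, Real.GammaSeq, inv_div, mul_div_assoc]

theorem d_summable (r : ℝ) (hr : 0 < r) (x : ℝ) :
    Summable (fun k : ℕ => 1 / Real.Gamma (2 * k + r + 1) * x ^ (2 * k)) := by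
  have key : ∀ y : ℝ, 0 < y → Summable (fun k : ℕ => 1 / Real.Gamma (2 * k + r + 1) * y ^ (2 * k)) := by
    intro y hy
    have hpos : ∀ k : ℕ, 0 < 1 / Real.Gamma (2 * k + r + 1) * y ^ (2 * k) := fun k => by
      have := Real.Gamma_pos_of_pos (show 0 < 2 * (k : ℝ) + r + 1 by positivity)
      positivity
    apply summable_of_ratio_test_tendsto_lt_one (l := 0) one_pos
    · exact Eventually.of_forall fun k => (hpos k).ne'
    · have h1 : Tendsto (fun k : ℕ => y ^ 2 * ((k : ℝ))⁻¹) atTop (𝓝 0) := by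
        have := (tendsto_inv_atTop_nhds_zero_nat (𝕜 := ℝ)).const_mul (y ^ 2)
        simpa using this
      refine squeeze_zero' (Eventually.of_forall fun k => by positivity) ?_ h1
      filter_upwards [eventually_ge_atTop 1] with k hk
      have hk' : (1 : ℝ) ≤ k := by exact_mod_cast hk
      rw [Real.norm_of_nonneg (hpos _).le, Real.norm_of_nonneg (hpos _).le]
      have e : 2 * ((k + 1 : ℕ) : ℝ) + r + 1 = (2 * k + r + 1) + 1 + 1 := by push_cast; ring
      rw [e, Real.Gamma_add_one (by positivity), Real.Gamma_add_one (by positivity)]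
      have hG := Real.Gamma_pos_of_pos (show 0 < 2 * (k : ℝ) + r + 1 by positivity)
      have e2 : 1 / ((2 * (k : ℝ) + r + 1 + 1) * ((2 * k + r + 1) * Real.Gamma (2 * k + r + 1))) * y ^ (2 * (k + 1)) /
          (1 / Real.Gamma (2 * k + r + 1) * y ^ (2 * k)) = y ^ 2 * ((2 * (k : ℝ) + r + 1 + 1) * (2 * k + r + 1))⁻¹ := by
        have : (2 * (k : ℝ) + r + 1 + 1) ≠ 0 := by positivity
        have : (2 * (k : ℝ) + r + 1) ≠ 0 := by positivity
        field_simp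
        ring
      rw [e2]
      gcongr
      nlinarith
  refine Summable.of_norm_bounded (key (|x| + 1) (by positivity)) fun k => ?_
  have hG := Real.Gamma_pos_of_pos (show 0 < 2 * (k : ℝ) + r + 1 by positivity)
  rw [norm_mul, norm_pow, Real.norm_eq_abs x, Real.norm_of_nonneg (by positivity)]
  gcongr
  linarith

noncomputable def EE (r x : ℝ) : ℝ := ∑' k : ℕ, x ^ (2 * (k : ℝ) + r) / Real.Gamma (2 * k + r + 1)

theorem EE_term (r : ℝ) (hr : 0 < r) (x : ℝ) (hx : 0 ≤ x) (k : ℕ) :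
    x ^ (2 * (k : ℝ) + r) / Real.Gamma (2 * k + r + 1) =
      x ^ r * (1 / Real.Gamma (2 * k + r + 1) * x ^ (2 * k)) := by
  rw [Real.rpow_add_of_nonneg hx (by positivity) hr.le]
  have : x ^ (2 * (k : ℝ)) = x ^ (2 * k) := by rw [← Real.rpow_natCast]; push_cast; rfl
  rw [this]; ring

theorem EE_summable (r : ℝ) (hr : 0 < r) (x : ℝ) (hx : 0 ≤ x) :
    Summable (fun k : ℕ => x ^ (2 * (k : ℝ) + r) / Real.Gamma (2 * k + r + 1)) := by
  simp_rw [EE_term r hr x hx]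
  exact (d_summable r hr x).mul_left _

theorem EE_eq (r : ℝ) (hr : 0 < r) (x : ℝ) (hx : 0 ≤ x) :
    EE r x = x ^ r * ∑' k : ℕ, 1 / Real.Gamma (2 * k + r + 1) * x ^ (2 * k) := by
  rw [EE, ← tsum_mul_left]
  congr 1; ext k
  exact EE_term r hr x hx k

theorem EE_bound (r : ℝ) (hr : 0 < r) (x R : ℝ) (hx : 0 ≤ x) (hR : x ≤ R) (k : ℕ) :
    ‖x ^ (2 * (k : ℝ) + r) / Real.Gamma (2 * k + r + 1)‖ ≤
      R ^ (2 * (k : ℝ) + r) / Real.Gamma (2 * k + r + 1) := by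
  have hG := Real.Gamma_pos_of_pos (show 0 < 2 * (k : ℝ) + r + 1 by positivity)
  rw [Real.norm_of_nonneg (by positivity)]
  gcongr

theorem EE_continuousOn (r : ℝ) (hr : 0 < r) (R : ℝ) (hR : 0 ≤ R) :
    ContinuousOn (EE r) (Set.Icc 0 R) := by
  apply continuousOn_tsum (u := fun k : ℕ => R ^ (2 * (k : ℝ) + r) / Real.Gamma (2 * k + r + 1))
  · intro k
    exact ((Real.continuous_rpow_const (by positivity)).div_const _).continuousOn
  · exact EE_summable r hr R hR
  · intro k x hx
    exact EE_bound r hr x R hx.1 hx.2 k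

theorem EE_deriv (r : ℝ) (hr : 1 < r) (x : ℝ) (hx : 0 < x) :
    HasDerivAt (EE r) (EE (r - 1) x) x := by
  have := hasDerivAt_tsum_of_isPreconnected (t := Set.Ioo 0 (x + 1)) (y₀ := x) (y := x)
    (g := fun (k : ℕ) (x : ℝ) => x ^ (2 * (k : ℝ) + r) / Real.Gamma (2 * k + r + 1))
    (g' := fun (k : ℕ) (x : ℝ) => x ^ (2 * (k : ℝ) + (r - 1)) / Real.Gamma (2 * k + (r - 1) + 1))
    (EE_summable (r - 1) (by linarith) (x + 1) (by linarith)) isOpen_Ioo isPreconnected_Ioo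
    (fun k y hy => ?_) (fun k y hy => EE_bound (r - 1) (by linarith) y _ hy.1.le hy.2.le k)
    ⟨hx, by linarith⟩ (EE_summable r (by linarith) x hx.le) ⟨hx, by linarith⟩
  · exact this
  · have hd := (Real.hasDerivAt_rpow_const (x := y) (p := 2 * (k : ℝ) + r) (Or.inl hy.1.ne')).div_const
      (Real.Gamma (2 * k + r + 1))
    refine hd.congr_deriv ?_
    have hp : 0 < 2 * (k : ℝ) + r := by positivity
    have hG := Real.Gamma_pos_of_pos hp
    rw [Real.Gamma_add_one hp.ne']
    have e1 : 2 * (k : ℝ) + (r - 1) + 1 = 2 * k + r := by ring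
    have e2 : 2 * (k : ℝ) + (r - 1) = 2 * k + r - 1 := by ring
    rw [e1, e2]
    field_simp

theorem EE_shift (r : ℝ) (hr : 0 < r) (x : ℝ) (hx : 0 ≤ x) :
    EE r x = x ^ r / Real.Gamma (r + 1) + EE (r + 2) x := by
  rw [EE, (EE_summable r hr x hx).tsum_eq_zero_add, EE]
  congr 1
  · simp
  · congr 1; ext k
    have e : 2 * ((k + 1 : ℕ) : ℝ) + r = 2 * k + (r + 2) := by push_cast; ring
    rw [e]

theorem EE_v (r : ℝ) (hr : 2 < r) :
    Tendsto (fun x => (EE r x + EE (r - 1) x) * Real.exp (-x)) atTop (𝓝 1) := by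
  have hG := Real.Gamma_pos_of_pos (show 0 < r - 1 by linarith)
  have hint := Real.GammaIntegral_convergent (show 0 < r - 1 by linarith)
  have h1 := (MeasureTheory.intervalIntegral_tendsto_integral_Ioi 0 hint tendsto_id).mul_const
    (Real.Gamma (r - 1))⁻¹
  rw [← Real.Gamma_eq_integral (by linarith), mul_inv_cancel₀ hG.ne'] at h1
  refine h1.congr' ?_
  filter_upwards [eventually_gt_atTop 0] with x hx
  rw [← intervalIntegral.integral_mul_const, id]
  rw [intervalIntegral.integral_eq_sub_of_hasDerivAt_of_le
    (f := fun x => (EE r x + EE (r - 1) x) * Real.exp (-x)) hx.le]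
  · have z : ∀ s : ℝ, 0 < s → EE s 0 = 0 := fun s hs => by
      rw [EE_eq s hs 0 le_rfl, Real.zero_rpow hs.ne', zero_mul]
    simp [z r (by linarith), z (r - 1) (by linarith)]
  · exact ((EE_continuousOn r (by linarith) x hx.le).add
      (EE_continuousOn (r - 1) (by linarith) x hx.le)).mul (by fun_prop)
  · intro y hy
    have d1 := EE_deriv r (by linarith) y hy.1
    have d2 := EE_deriv (r - 1) (by linarith) y hy.1
    have d3 : HasDerivAt (fun x : ℝ => Real.exp (-x)) (-Real.exp (-y)) y := by
      simpa using (hasDerivAt_neg y).exp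
    have d4 := (d1.add d2).mul d3
    refine d4.congr_deriv ?_
    have := EE_shift (r - 1 - 1) (by linarith) y hy.1.le
    rw [this]
    have e1 : r - 1 - 1 + 2 = r := by ring
    have e2 : r - 1 - 1 + 1 = r - 1 := by ring
    rw [e1, e2]
    simp only [id, Pi.add_apply]
    ring
  · apply IntervalIntegrable.mul_const
    rw [intervalIntegrable_iff, Set.uIoc_of_le hx.le]
    exact hint.mono_set Set.Ioc_subset_Ioi_self

theorem EE_asymp (r : ℝ) (hr : 2 < r) :
    Tendsto (fun x => 2 * EE r x * Real.exp (-x)) atTop (𝓝 1) := by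
  have := lh_aux (fun x => EE r x * Real.exp x) (fun x => Real.exp (2 * x) / 2)
    (fun x => (EE r x + EE (r - 1) x) * Real.exp x) (fun x => Real.exp (2 * x)) ?_ ?_ ?_ ?_ ?_
  · refine this.congr fun x => ?_
    rw [Real.exp_neg, two_mul x, Real.exp_add]
    field_simp
  · filter_upwards [eventually_gt_atTop 0] with x hx
    have := (EE_deriv r (by linarith) x hx).mul (Real.hasDerivAt_exp x)
    refine this.congr_deriv ?_; ring
  · refine Eventually.of_forall fun x => ?_
    have := (((hasDerivAt_id x).const_mul 2).exp).div_const 2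
    refine this.congr_deriv ?_; simp
  · exact Eventually.of_forall fun x => Real.exp_pos _
  · exact (Real.tendsto_exp_atTop.comp (tendsto_id.const_mul_atTop two_pos)).atTop_div_const two_pos
  · refine (EE_v r hr).congr fun x => ?_
    rw [Real.exp_neg, two_mul x, Real.exp_add]
    field_simp

noncomputable def bb (μ : ℝ) (k : ℕ) : ℝ :=
  1 / (Real.Gamma ((k : ℝ) + 3 / 2) * Real.Gamma ((k : ℝ) + μ + 3 / 2))

noncomputable def PP (μ x : ℝ) : ℝ := ∑' k : ℕ, bb μ k * (x / 2) ^ (2 * k)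

noncomputable def aa (μ : ℝ) (m k : ℕ) : ℝ :=
  Real.sqrt Real.pi * 2 ^ (-(2 * (m : ℝ) + μ + 3 / 2)) * bb μ (k + m) / 4 ^ k

theorem coef_lim (μ : ℝ) (m : ℕ) (hm : 1 ≤ m) (hμ : 0 < m + μ) :
    Tendsto (fun k : ℕ => aa μ m k / (1 / Real.Gamma (2 * k + (2 * (m : ℝ) + μ + 3 / 2) + 1)))
      atTop (𝓝 1) := by
  have hm' : (1 : ℝ) ≤ m := by exact_mod_cast hm
  obtain ⟨r, hr⟩ : ∃ r : ℝ, r = 2 * (m : ℝ) + μ + 3 / 2 := ⟨_, rfl⟩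
  have h1 := gamma_seq_aux ((m : ℝ) + 1 / 2) (by linarith)
  have h2 := gamma_seq_aux ((m : ℝ) + μ + 1 / 2) (by linarith)
  have h3 := gamma_seq_aux ((r - 1) / 2) (by linarith)
  have h4 := gamma_seq_aux (r / 2) (by linarith)
  have h5 := (h3.mul h4).div (h1.mul h2) (by norm_num)
  rw [show (1 * 1 / (1 * 1) : ℝ) = 1 by norm_num] at h5
  refine h5.congr' ?_
  filter_upwards [eventually_ge_atTop 1] with k hk
  have hk' : (0 : ℝ) < k := by exact_mod_cast hk
  simp only [aa, bb]
  rw [← hr]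
  have hdup := Real.Gamma_mul_Gamma_add_half ((k : ℝ) + ((r - 1) / 2 + 1))
  have e1 : (k : ℝ) + ((r - 1) / 2 + 1) + 1 / 2 = k + (r / 2 + 1) := by ring
  have e2 : 2 * ((k : ℝ) + ((r - 1) / 2 + 1)) = 2 * k + r + 1 := by ring
  have e3 : 1 - (2 * (k : ℝ) + r + 1) = -r - (2 * k : ℕ) := by push_cast; ring
  rw [e1, e2, e3, Real.rpow_sub_natCast two_ne_zero, pow_mul] at hdup
  norm_num only at hdup
  have e4 : ((k + m : ℕ) : ℝ) + 3 / 2 = k + ((m : ℝ) + 1 / 2 + 1) := by push_cast; ring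
  have e5 : ((k + m : ℕ) : ℝ) + μ + 3 / 2 = k + ((m : ℝ) + μ + 1 / 2 + 1) := by push_cast; ring
  rw [e4, e5]
  have hpow : (k : ℝ) ^ ((r - 1) / 2) * (k : ℝ) ^ (r / 2) =
      (k : ℝ) ^ ((m : ℝ) + 1 / 2) * (k : ℝ) ^ ((m : ℝ) + μ + 1 / 2) := by
    rw [← Real.rpow_add hk', ← Real.rpow_add hk']; congr 1; rw [hr]; ring
  have G1 := Real.Gamma_pos_of_pos (show 0 < (k : ℝ) + ((m : ℝ) + 1 / 2 + 1) by linarith)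
  have G2 := Real.Gamma_pos_of_pos (show 0 < (k : ℝ) + ((m : ℝ) + μ + 1 / 2 + 1) by linarith)
  have p1 : 0 < (k : ℝ) ^ ((m : ℝ) + 1 / 2) := by positivity
  have p2 : 0 < (k : ℝ) ^ ((m : ℝ) + μ + 1 / 2) := by positivity
  have hf : (0 : ℝ) < (Nat.factorial k : ℝ) := by positivity
  rw [Pi.div_apply, div_mul_div_comm, div_mul_div_comm, hdup,
    show (k : ℝ) ^ ((r - 1) / 2) * (Nat.factorial k : ℝ) * ((k : ℝ) ^ (r / 2) * (Nat.factorial k : ℝ)) =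
      ((k : ℝ) ^ ((r - 1) / 2) * (k : ℝ) ^ (r / 2)) * (Nat.factorial k : ℝ) ^ 2 by ring, hpow]
  field_simp

theorem aa_summable (μ : ℝ) (m : ℕ) (hm : 1 ≤ m) (hμ : 0 < m + μ) (x : ℝ) :
    Summable (fun k => aa μ m k * x ^ (2 * k)) := by
  have hm' : (1 : ℝ) ≤ m := by exact_mod_cast hm
  have hr : 0 < 2 * (m : ℝ) + μ + 3 / 2 := by linarith
  have h := d_summable _ hr x
  apply summable_of_isBigO_nat h
  apply Asymptotics.IsBigO.mul _ (Asymptotics.isBigO_refl _ _)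
  apply Asymptotics.IsEquivalent.isBigO
  apply Asymptotics.isEquivalent_of_tendsto_one
  exact coef_lim μ m hm hμ

theorem exists_m (μ : ℝ) : ∃ m : ℕ, 1 ≤ m ∧ 0 < m + μ := by
  obtain ⟨n, hn⟩ := exists_nat_gt (-μ)
  refine ⟨n + 1, by omega, ?_⟩
  push_cast; linarith

theorem bb_eq (μ : ℝ) (m : ℕ) (x : ℝ) (k : ℕ) :
    bb μ (k + m) * (x / 2) ^ (2 * (k + m)) =
      (x / 2) ^ (2 * m) * (2 ^ (2 * (m : ℝ) + μ + 3 / 2) / Real.sqrt Real.pi) * (aa μ m k * x ^ (2 * k)) := by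
  have h1 : 0 < Real.sqrt Real.pi := Real.sqrt_pos.2 Real.pi_pos
  have h2 : (0 : ℝ) < 2 ^ (2 * (m : ℝ) + μ + 3 / 2) := by positivity
  have h3 : (4 : ℝ) ^ k = 2 ^ (2 * k) := by rw [pow_mul]; norm_num
  rw [aa, Real.rpow_neg zero_le_two, h3, div_pow, div_pow, mul_add, pow_add, pow_add]
  field_simp

theorem bb_summable (μ x : ℝ) : Summable (fun k => bb μ k * (x / 2) ^ (2 * k)) := by
  obtain ⟨m, hm, hμ⟩ := exists_m μ
  rw [← summable_nat_add_iff m]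
  simp_rw [bb_eq]
  exact (aa_summable μ m hm hμ x).mul_left _

theorem L_eq (μ x : ℝ) (hx : 0 < x) : modStruveL μ x = (x / 2) ^ (μ + 1) * PP μ x := by
  rw [modStruveL, PP, ← tsum_mul_left]
  congr 1; ext k
  have : μ + 2 * (k : ℝ) + 1 = μ + 1 + (2 * k : ℕ) := by push_cast; ring
  rw [this, Real.rpow_add_natCast (by positivity), bb]
  ring

theorem PP_continuous (μ : ℝ) : Continuous (PP μ) := by
  rw [continuous_iff_continuousAt]
  intro x
  have : ContinuousOn (PP μ) (Set.Icc (-(|x| + 1)) (|x| + 1)) := by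
    apply continuousOn_tsum (u := fun k : ℕ => ‖bb μ k * ((|x| + 1) / 2) ^ (2 * k)‖)
    · intro k; fun_prop
    · exact (bb_summable μ _).norm
    · intro k y hy
      rw [norm_mul, norm_mul, norm_pow, norm_pow]
      gcongr
      rw [norm_div, norm_div]
      gcongr
      rw [Real.norm_eq_abs, Real.norm_of_nonneg (by positivity)]
      exact abs_le.2 hy
  exact this.continuousAt (Icc_mem_nhds (by linarith [neg_abs_le x]) (by linarith [le_abs_self x]))

theorem PP_asymp (μ : ℝ) :
    Tendsto (fun x => PP μ x * (x / 2) ^ (μ + 1) * Real.sqrt (2 * Real.pi) * x ^ (1 / 2 : ℝ) * Real.exp (-x))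
      atTop (𝓝 1) := by
  obtain ⟨m, hm, hμ⟩ := exists_m μ
  have hm' : (1 : ℝ) ≤ m := by exact_mod_cast hm
  obtain ⟨r, hr⟩ : ∃ r : ℝ, r = 2 * (m : ℝ) + μ + 3 / 2 := ⟨_, rfl⟩
  have hr2 : 2 < r := by linarith
  have hA := abel_aux (aa μ m) (fun k : ℕ => 1 / Real.Gamma (2 * k + r + 1))
    (fun k => one_div_pos.2 (Real.Gamma_pos_of_pos (by positivity)))
    (d_summable r (by linarith)) (aa_summable μ m hm hμ) (by rw [hr]; exact coef_lim μ m hm hμ)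
  have hE := EE_asymp r hr2
  have hmain := hA.mul hE
  have hfin : Tendsto (fun x : ℝ => ∑ k ∈ Finset.range m, (bb μ k * (1 / 2) ^ (2 * k) * (1 / 2) ^ (μ + 1) * Real.sqrt (2 * Real.pi)) *
      (x ^ (2 * k + (μ + 1) + 1 / 2 : ℝ) * Real.exp (-1 * x))) atTop (𝓝 0) := by
    have := tendsto_finsetSum (Finset.range m) (fun k _ =>
      (tendsto_rpow_mul_exp_neg_mul_atTop_nhds_zero (2 * k + (μ + 1) + 1 / 2 : ℝ) 1 one_pos).const_mul
        (bb μ k * (1 / 2) ^ (2 * k) * (1 / 2) ^ (μ + 1) * Real.sqrt (2 * Real.pi)))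
    simpa using this
  have hall := hfin.add hmain
  rw [show (0 + 1 * 1 : ℝ) = 1 by norm_num] at hall
  refine hall.congr' ?_
  filter_upwards [eventually_gt_atTop 0] with x hx
  have hP : PP μ x = ∑ k ∈ Finset.range m, bb μ k * (x / 2) ^ (2 * k) +
      (x / 2) ^ (2 * m) * (2 ^ r / Real.sqrt Real.pi) * ∑' k, aa μ m k * x ^ (2 * k) := by
    rw [PP, ← (bb_summable μ x).sum_add_tsum_nat_add m, ← tsum_mul_left]
    congr 1
    simp_rw [bb_eq, hr]
  rw [hP, EE_eq r (by linarith) x hx.le]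
  set D := ∑' k : ℕ, 1 / Real.Gamma (2 * k + r + 1) * x ^ (2 * k) with hD
  have hDpos : 0 < D := by
    refine (d_summable r (by linarith) x).tsum_pos (fun k => ?_) 0 ?_
    · have := Real.Gamma_pos_of_pos (show 0 < 2 * (k : ℝ) + r + 1 by positivity)
      positivity
    · have := Real.Gamma_pos_of_pos (show 0 < 2 * ((0 : ℕ) : ℝ) + r + 1 by positivity)
      positivity
  simp only [add_mul, Finset.sum_mul]
  congr 1
  · apply Finset.sum_congr rfl
    intro k _
    rw [show (2 * k + (μ + 1) + 1 / 2 : ℝ) = (μ + 1) + 1 / 2 + (2 * k : ℕ) by push_cast; ring,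
      Real.rpow_add_natCast hx.ne', Real.rpow_add hx, div_eq_mul_one_div x 2,
      Real.mul_rpow hx.le (by norm_num), mul_pow, neg_one_mul]
    ring
  · have e1 : x ^ r = x ^ (2 * m) * x ^ (μ + 1) * x ^ (1 / 2 : ℝ) := by
      rw [← Real.rpow_natCast, ← Real.rpow_add hx, ← Real.rpow_add hx, hr]
      congr 1; push_cast; ring
    have e2 : (2 : ℝ) ^ r = 2 ^ (2 * m) * 2 ^ (μ + 1) * Real.sqrt 2 := by
      rw [Real.sqrt_eq_rpow, ← Real.rpow_natCast, ← Real.rpow_add two_pos, ← Real.rpow_add two_pos, hr]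
      congr 1; push_cast; ring
    have e3 : Real.sqrt 2 * Real.sqrt 2 = 2 := Real.mul_self_sqrt zero_le_two
    have h1 : 0 < Real.sqrt Real.pi := Real.sqrt_pos.2 Real.pi_pos
    have h2 : (0 : ℝ) < 2 ^ (μ + 1) := by positivity
    rw [e1, e2, Real.sqrt_mul zero_le_two, Real.div_rpow hx.le zero_le_two, div_pow]
    generalize (∑' k, aa μ m k * x ^ (2 * k)) = S
    field_simp
    rw [Real.sq_sqrt zero_le_two]

theorem struve_exp_integral_asymptotic_infinity (γ n ν : ℝ) (hγ1 : 0 ≤ γ) (hγ2 : γ < 1)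
    (hn : n > -(3 / 2)) :
    Filter.Tendsto
      (fun x : ℝ =>
        (∫ t in (0 : ℝ)..x, Real.exp (-γ * t) * (t ^ (-ν) * modStruveL (ν + n) t)) /
          ((1 / (Real.sqrt (2 * Real.pi) * (1 - γ))) * x ^ (-ν - 1 / 2) *
            Real.exp ((1 - γ) * x)))
      Filter.atTop (nhds 1) := by
  have hc : 0 < 1 - γ := by linarith
  have hs : 0 < Real.sqrt (2 * Real.pi) := Real.sqrt_pos.2 (by positivity)
  set h : ℝ → ℝ := fun t => t ^ (n + 1) * (Real.exp (-γ * t) * ((1 / 2) ^ (ν + n + 1) * PP (ν + n) t)) with hh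
  have hP := PP_continuous (ν + n)
  have hker : ∀ t, 0 < t → Real.exp (-γ * t) * (t ^ (-ν) * modStruveL (ν + n) t) = h t := by
    intro t ht
    rw [L_eq _ _ ht, hh, div_eq_mul_one_div t 2, Real.mul_rpow ht.le (by norm_num)]
    have : t ^ (n + 1) = t ^ (-ν) * t ^ (ν + n + 1) := by
      rw [← Real.rpow_add ht]; congr 1; ring
    simp only [this]; ring
  have hint : ∀ x, IntervalIntegrable h MeasureTheory.volume 0 x := fun x =>
    (intervalIntegral.intervalIntegrable_rpow' (by linarith)).mul_continuousOn (by fun_prop)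
  have hcont : ContinuousOn h (Set.Ioi 0) := by
    apply ContinuousOn.mul
    · intro t ht
      exact (Real.continuousAt_rpow_const t _ (Or.inl (ne_of_gt ht))).continuousWithinAt
    · fun_prop
  have main := lh_aux (fun x => ∫ t in (0 : ℝ)..x, h t)
    (fun x => (1 / (Real.sqrt (2 * Real.pi) * (1 - γ))) * x ^ (-ν - 1 / 2) * Real.exp ((1 - γ) * x))
    h (fun x => (1 / Real.sqrt (2 * Real.pi)) * x ^ (-ν - 1 / 2) * Real.exp ((1 - γ) * x) *
      (1 + (-ν - 1 / 2) / (1 - γ) * x⁻¹)) ?_ ?_ ?_ ?_ ?_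
  · refine main.congr' ?_
    filter_upwards [eventually_gt_atTop 0] with x hx
    congr 1
    apply intervalIntegral.integral_congr_ae
    refine Eventually.of_forall fun t ht => ?_
    rw [Set.uIoc_of_le hx.le] at ht
    exact (hker t ht.1).symm
  · filter_upwards [eventually_gt_atTop 0] with x hx
    exact intervalIntegral.integral_hasDerivAt_right (hint x)
      (hcont.stronglyMeasurableAtFilter isOpen_Ioi x hx) (hcont.continuousAt (Ioi_mem_nhds hx))
  · filter_upwards [eventually_gt_atTop 0] with x hx
    have d1 := (Real.hasDerivAt_rpow_const (x := x) (p := -ν - 1 / 2) (Or.inl hx.ne')).const_mul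
      (1 / (Real.sqrt (2 * Real.pi) * (1 - γ)))
    have d2 := ((hasDerivAt_id x).const_mul (1 - γ)).exp
    refine (d1.mul d2).congr_deriv ?_
    rw [Real.rpow_sub_one hx.ne']
    simp only [id]
    field_simp
    ring
  · have hl : Tendsto (fun x : ℝ => 1 + (-ν - 1 / 2) / (1 - γ) * x⁻¹) atTop (𝓝 1) := by
      simpa using (tendsto_inv_atTop_zero.const_mul ((-ν - 1 / 2) / (1 - γ))).const_add 1
    filter_upwards [eventually_gt_atTop 0, hl.eventually (lt_mem_nhds one_pos)] with x hx h1
    positivity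
  · have := (tendsto_exp_mul_div_rpow_atTop (ν + 1 / 2) (1 - γ) hc).const_mul_atTop
      (show 0 < 1 / (Real.sqrt (2 * Real.pi) * (1 - γ)) by positivity)
    refine this.congr' ?_
    filter_upwards [eventually_gt_atTop 0] with x hx
    rw [show -ν - 1 / 2 = -(ν + 1 / 2) by ring, Real.rpow_neg hx.le]
    ring
  · have hl : Tendsto (fun x : ℝ => 1 + (-ν - 1 / 2) / (1 - γ) * x⁻¹) atTop (𝓝 1) := by
      simpa using (tendsto_inv_atTop_zero.const_mul ((-ν - 1 / 2) / (1 - γ))).const_add 1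
    have h3 := (PP_asymp (ν + n)).mul (hl.inv₀ one_ne_zero)
    rw [show (1 * (1 : ℝ)⁻¹) = 1 by norm_num] at h3
    refine h3.congr' ?_
    filter_upwards [eventually_gt_atTop 0] with x hx
    rw [← hker x hx, L_eq _ _ hx]
    have e1 : x ^ (-ν) = x ^ (-ν - 1 / 2) * x ^ (1 / 2 : ℝ) := by
      rw [← Real.rpow_add hx]; congr 1; ring
    have e2 : Real.exp (-γ * x) = Real.exp ((1 - γ) * x) * Real.exp (-x) := by
      rw [← Real.exp_add]; congr 1; ring
    have p1 : 0 < x ^ (-ν - 1 / 2) := by positivity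
    rw [e1, e2]
    generalize (1 + (-ν - 1 / 2) / (1 - γ) * x⁻¹) = q
    generalize x ^ (-ν - 1 / 2) = w at *
    rw [div_mul_eq_div_div]
    field_simp
end
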